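/- arXiv:2006.08669 — 3 statements merged into one kernel-verified Lean document; each statement's English description precedes it below -/
import Mathlib

section
/- Theorem 1 (performance guarantee of the online attack algorithm). Let (θ_0,…,θ_{T−1}) in Θ and (z_0,…,z_{T−1}) in F be an attack trace, i.e. for every t < T the point z_t maximizes h(θ_t, ·) over F, and define its regret as Regret(T) := ∑_{t<T} g_{z_t}(θ_t) − inf_{θ∈Θ} ∑_{t<T} g_{z_t}(θ). Then the produced poisoning sequence D* := (z_0,…,z_{T−1}) satisfies M* − M(D*) ≤ Regret(T)/T. -/
open scoped BigOperators

/-!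
The infimum `M(D)` is at most the value `Φ_D(θ_t)` at any iterate `θ_t`. That value is an
average of numbers `g_z(θ_t)` with `z` feasible, hence at most `g_{z_t}(θ_t)`, as `z_t` maximizes
over feasible points. Averaging over `t` bounds `M*` by `(1/T) ∑ g_{z_t}(θ_t)`, which exceeds
`M(D*)` by exactly `Regret(T)/T`.
-/

section PoisoningGame

variable {ι Z Θ : Type*} [Fintype ι]

/-- The value `M(D) = inf_θ Φ_D(θ)` of a poisoning sequence `D` with loss `g z θ` of the model `θ`
on the point `z`. The objective `Φ_D` is the average of the losses over the sequence, and the type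
`Z` consists of the feasible points only. As a real infimum it is meaningful when `Θ` is nonempty
and `Φ_D` is bounded below. -/
noncomputable def attackValue (g : Z → Θ → ℝ) (D : ι → Z) : ℝ :=
  ⨅ θ, 𝔼 t, g (D t) θ

/-- The regret of a learner who plays `θs t` against the loss `g (zs t)`, relative to the best
fixed model in hindsight. -/
noncomputable def onlineRegret (g : Z → Θ → ℝ) (θs : ι → Θ) (zs : ι → Z) : ℝ :=
  (∑ t, g (zs t) (θs t)) - ⨅ θ, ∑ t, g (zs t) θ

variable {g : Z → Θ → ℝ}

lemma attackValue_eq_iInf_sum_div_card (g : Z → Θ → ℝ) (D : ι → Z) :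
    attackValue g D = (⨅ θ, ∑ t, g (D t) θ) / Fintype.card ι := by
  simp only [attackValue, Fintype.expect_eq_sum_div_card, div_eq_mul_inv,
    Real.iInf_mul_of_nonneg (inv_nonneg.2 (Nat.cast_nonneg _))]

lemma onlineRegret_div_card (g : Z → Θ → ℝ) (θs : ι → Θ) (zs : ι → Z) :
    onlineRegret g θs zs / Fintype.card ι = 𝔼 t, g (zs t) (θs t) - attackValue g zs := by
  rw [onlineRegret, sub_div, attackValue_eq_iInf_sum_div_card, Fintype.expect_eq_sum_div_card]

lemma bddBelow_range_expect (hg : ∀ z, BddBelow (Set.range (g z))) (D : ι → Z) :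
    BddBelow (Set.range fun θ ↦ 𝔼 t, g (D t) θ) := by
  choose c hc using hg
  refine ⟨𝔼 t, c (D t), ?_⟩
  rintro _ ⟨θ, rfl⟩
  exact Finset.expect_le_expect fun t _ ↦ hc (D t) ⟨θ, rfl⟩

variable [Nonempty ι]

lemma attackValue_le_of_forall_le (hg : ∀ z, BddBelow (Set.range (g z))) {θ : Θ} {c : ℝ}
    (hc : ∀ w, g w θ ≤ c) (D : ι → Z) : attackValue g D ≤ c :=
  calc attackValue g D
    _ ≤ 𝔼 t, g (D t) θ := ciInf_le (bddBelow_range_expect hg D) θ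
    _ ≤ c := Finset.expect_le Finset.univ_nonempty fun t _ ↦ hc (D t)

lemma attackValue_le_expect_of_trace (hg : ∀ z, BddBelow (Set.range (g z)))
    {θs : ι → Θ} {zs : ι → Z} (htrace : ∀ t w, g w (θs t) ≤ g (zs t) (θs t)) (D : ι → Z) :
    attackValue g D ≤ 𝔼 t, g (zs t) (θs t) :=
  Finset.le_expect Finset.univ_nonempty fun t _ ↦
    attackValue_le_of_forall_le hg (htrace t) D

theorem attack_regret_guarantee_general (hg : ∀ z, BddBelow (Set.range (g z)))
    {θs : ι → Θ} {zs : ι → Z} (htrace : ∀ t w, g w (θs t) ≤ g (zs t) (θs t)) :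
    (⨆ D : ι → Z, attackValue g D) - attackValue g zs ≤
      onlineRegret g θs zs / Fintype.card ι := by
  have : Nonempty (ι → Z) := ⟨zs⟩
  rw [onlineRegret_div_card]
  exact sub_le_sub_right (ciSup_le (attackValue_le_expect_of_trace hg htrace)) _

end PoisoningGame

/-- Theorem 1 (performance guarantee of the online attack algorithm).
If `(θs, zs)` is an attack trace (each `zs t` maximizes `h (θs t) ·` over the feasible
set `F`), then the produced poisoning sequence `zs` satisfies
`M* − M(zs) ≤ Regret(T) / T`. -/
theorem attack_regret_guarantee
    {Θ P : Type*} [Nonempty Θ]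
    (ℓ Δ : Θ → P → ℝ)
    (hℓ : ∀ θ z, 0 ≤ ℓ θ z) (hΔ : ∀ θ z, 0 ≤ Δ θ z)
    (Dc : Multiset P) (hDc : Dc ≠ 0) (n : ℕ) (hn : Multiset.card Dc = n)
    (F : Finset P) (hF : F.Nonempty)
    (T : ℕ) (hT : 0 < T)
    (ε lam : ℝ) (hε : ε = (T : ℝ) / n) (hlam : 0 ≤ lam)
    -- per-model average clean loss
    (b : Θ → ℝ) (hb : ∀ θ, b θ = (1 / (n : ℝ)) * (Dc.map (ℓ θ)).sum)
    -- per-point penalized contribution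
    (h : Θ → P → ℝ) (hh : ∀ θ z, h θ z = ε * ℓ θ z + lam * Δ θ z)
    (g : P → Θ → ℝ) (hg : ∀ z θ, g z θ = b θ + h θ z)
    -- penalized attack objective of a poisoning sequence
    (Φ : (Fin T → F) → Θ → ℝ)
    (hΦ : ∀ D θ, Φ D θ = (1 / (T : ℝ)) * ∑ t, g (D t) θ)
    -- its value, and the optimal attack value
    (M : (Fin T → F) → ℝ) (hM : ∀ D, M D = ⨅ θ : Θ, Φ D θ)
    (Mstar : ℝ) (hMstar : Mstar = ⨆ D : Fin T → F, M D)
    -- the attack trace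
    (θs : Fin T → Θ) (zs : Fin T → F)
    (htrace : ∀ t : Fin T, ∀ w ∈ F, h (θs t) w ≤ h (θs t) (zs t))
    -- regret of the online algorithm
    (Regret : ℝ)
    (hReg : Regret = (∑ t, g (zs t) (θs t)) - ⨅ θ : Θ, ∑ t, g (zs t) θ) :
    Mstar - M zs ≤ Regret / T := by
  have : NeZero T := ⟨hT.ne'⟩
  have hb_nonneg : ∀ θ, 0 ≤ b θ := fun θ ↦ by
    rw [hb]
    exact mul_nonneg (by positivity) (Multiset.sum_nonneg (by simpa using fun z _ ↦ hℓ θ z))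
  have hh_nonneg : ∀ θ z, 0 ≤ h θ z := fun θ z ↦ by
    rw [hh, hε]
    exact add_nonneg (mul_nonneg (by positivity) (hℓ θ z)) (mul_nonneg hlam (hΔ θ z))
  have hg_bdd : ∀ z : F, BddBelow (Set.range (g z)) := fun z ↦
    ⟨0, Set.forall_mem_range.2 fun θ ↦ hg z θ ▸ add_nonneg (hb_nonneg θ) (hh_nonneg θ z)⟩
  have hg_trace : ∀ t (w : F), g w (θs t) ≤ g (zs t) (θs t) := fun t w ↦ by
    simpa only [hg, add_le_add_iff_left] using htrace t w w.2
  have hM_eq : M = attackValue fun z : F ↦ g z := funext fun D ↦ by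
    simp only [hM, hΦ, attackValue, Fintype.expect_eq_sum_div_card, Fintype.card_fin,
      div_eq_inv_mul, mul_one]
  simpa only [hMstar, hM_eq, hReg, onlineRegret, Fintype.card_fin] using
    attack_regret_guarantee_general hg_bdd hg_trace
end

section
/- Certification by the played losses: if (θ_0,…,θ_{T−1}) in Θ and (z_0,…,z_{T−1}) in F form an attack trace, i.e. for every t < T the point z_t maximizes h(θ_t,·) over F, then the optimal attack value satisfies M* ≤ (1/T)·∑_{t<T} g_{z_t}(θ_t). -/
open scoped BigOperators

/-!
The optimal attack value is the lower value of a zero-sum game, so weak duality bounds it by what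
the attacker can gain against any single fixed parameter, where averaging over several poisoning
points never beats the best one. Against `θs t` the best poisoning point is `zs t`, so the value is
at most *every* played loss, and in particular at most their average.
-/

section AttackGame

variable {Θ ι σ τ : Type*} [Fintype σ]

theorem bddBelow_range_expect_s3 {f : σ → Θ → ℝ} (hf : ∀ t, BddBelow (Set.range (f t))) :
    BddBelow (Set.range fun θ ↦ 𝔼 t, f t θ) := by
  choose c hc using hf
  refine ⟨𝔼 t, c t, ?_⟩
  rintro _ ⟨θ, rfl⟩
  exact Finset.expect_le_expect fun t _ ↦ hc t ⟨θ, rfl⟩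

variable [Nonempty σ] {g : ι → Θ → ℝ}

theorem iSup_iInf_expect_le_of_forall_le (hg : ∀ z, BddBelow (Set.range (g z))) {θ₀ : Θ} {z₀ : ι}
    (hmax : ∀ z, g z θ₀ ≤ g z₀ θ₀) :
    ⨆ D : σ → ι, ⨅ θ, 𝔼 t, g (D t) θ ≤ g z₀ θ₀ := by
  have : Nonempty ι := ⟨z₀⟩
  refine ciSup_le fun D ↦ ?_
  calc ⨅ θ, 𝔼 t, g (D t) θ
      ≤ 𝔼 t, g (D t) θ₀ := ciInf_le (bddBelow_range_expect_s3 fun t ↦ hg (D t)) θ₀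
    _ ≤ g z₀ θ₀ := Finset.expect_le Finset.univ_nonempty fun t _ ↦ hmax (D t)

theorem attack_value_le_played_losses_general [Fintype τ] [Nonempty τ]
    (hg : ∀ z, BddBelow (Set.range (g z))) {θs : τ → Θ} {zs : τ → ι}
    (htrace : ∀ s z, g z (θs s) ≤ g (zs s) (θs s)) :
    ⨆ D : σ → ι, ⨅ θ, 𝔼 t, g (D t) θ ≤ 𝔼 s, g (zs s) (θs s) :=
  Finset.le_expect Finset.univ_nonempty fun s _ ↦
    iSup_iInf_expect_le_of_forall_le hg (htrace s)

end AttackGame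

theorem one_div_mul_sum_eq_expect {K : Type*} [Semifield K] [CharZero K] {T : ℕ} (f : Fin T → K) :
    (1 / (T : K)) * ∑ t, f t = 𝔼 t, f t := by
  rw [Fintype.expect_eq_sum_div_card, Fintype.card_fin, one_div_mul_eq_div]

theorem penalized_loss_nonneg {P : Type*} {ℓ : P → ℝ} (hℓ : ∀ z, 0 ≤ ℓ z) {c ε lam gap : ℝ}
    (hc : 0 ≤ c) (hε : 0 ≤ ε) (hlam : 0 ≤ lam) (hgap : 0 ≤ gap) (Dc : Multiset P) (z : P) :
    0 ≤ c * (Dc.map ℓ).sum + (ε * ℓ z + lam * gap) := by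
  have hclean : 0 ≤ (Dc.map ℓ).sum := Multiset.sum_nonneg (by simpa using fun z _ ↦ hℓ z)
  have hpoison : 0 ≤ ℓ z := hℓ z
  positivity

/-- Certification by the played losses: if `(θs, zs)` is an attack trace (each `zs t`
maximizes `h (θs t) ·` over `F`), then `M* ≤ (1/T) ∑_{t<T} g (zs t) (θs t)`. -/
theorem attack_value_le_played_losses
    {Θ P : Type*} [Nonempty Θ]
    (ℓ Δ : Θ → P → ℝ)
    (hℓ : ∀ θ z, 0 ≤ ℓ θ z) (hΔ : ∀ θ z, 0 ≤ Δ θ z)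
    (Dc : Multiset P) (hDc : Dc ≠ 0) (n : ℕ) (hn : Multiset.card Dc = n)
    (F : Finset P) (hF : F.Nonempty)
    (T : ℕ) (hT : 0 < T)
    (ε lam : ℝ) (hε : ε = (T : ℝ) / n) (hlam : 0 ≤ lam)
    (b : Θ → ℝ) (hb : ∀ θ, b θ = (1 / (n : ℝ)) * (Dc.map (ℓ θ)).sum)
    (h : Θ → P → ℝ) (hh : ∀ θ z, h θ z = ε * ℓ θ z + lam * Δ θ z)
    (g : P → Θ → ℝ) (hg : ∀ z θ, g z θ = b θ + h θ z)
    (Φ : (Fin T → F) → Θ → ℝ)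
    (hΦ : ∀ D θ, Φ D θ = (1 / (T : ℝ)) * ∑ t, g (D t) θ)
    (M : (Fin T → F) → ℝ) (hM : ∀ D, M D = ⨅ θ : Θ, Φ D θ)
    (Mstar : ℝ) (hMstar : Mstar = ⨆ D : Fin T → F, M D)
    (θs : Fin T → Θ) (zs : Fin T → F)
    (htrace : ∀ t : Fin T, ∀ w ∈ F, h (θs t) w ≤ h (θs t) (zs t)) :
    Mstar ≤ (1 / (T : ℝ)) * ∑ t, g (zs t) (θs t) := by
  have : NeZero T := ⟨hT.ne'⟩
  have hg_nonneg (z : P) (θ : Θ) : 0 ≤ g z θ := by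
    rw [hg, hb, hh, hε]
    exact penalized_loss_nonneg (hℓ θ) (by positivity) (by positivity) hlam (hΔ θ z) Dc z
  simp only [hMstar, hM, hΦ, one_div_mul_sum_eq_expect]
  exact attack_value_le_played_losses_general (g := fun z : F ↦ g z)
    (fun z ↦ ⟨0, Set.forall_mem_range.2 (hg_nonneg z)⟩)
    (fun t w ↦ by simpa only [hg, add_le_add_iff_left] using htrace t w w.2)
end

section
/- Regret bound for projected online gradient descent with step sizes η_t = d/(G√t): for every comparator y ∈ K, ∑_{t=1}^{T} f_t(x_t) − ∑_{t=1}^{T} f_t(y) ≤ 3·G·d·√T. (This is the bound Regret(T) ≤ 3Gd√T, i.e. Regret(T)/T ≤ 3Gd/√T, invoked in the proof of Corollary 1.) -/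
open scoped BigOperators

/-!
The squared distance `‖x t - y‖ ^ 2` to the comparator is a potential. Projecting onto a convex set
does not increase the distance to any of its points, so one step lowers the potential by at least
`2 η t ⟪g t, x t - y⟫ - η t ^ 2 ‖g t‖ ^ 2`, and by convexity `⟪g t, x t - y⟫` dominates the regret
of round `t`. Dividing by `2 η t` and summing by parts, the potential differences contribute at most
`d ^ 2 / (2 η T)` as `1 / η t` is nondecreasing, while the gradient terms contribute
`G ^ 2 / 2 * ∑ η t`. For `η t = d / (G √t)` these are `G d √T / 2` and at most `G d √T`.
-/

open Finset
open scoped InnerProductSpace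

section FirstOrderCondition

theorem convexOn_add_le_of_hasFDerivWithinAt {F : Type*} [NormedAddCommGroup F] [NormedSpace ℝ F]
    {s : Set F} {f : F → ℝ} {f' : F →L[ℝ] ℝ} {x y : F} (hf : ConvexOn ℝ s f)
    (hx : x ∈ s) (hy : y ∈ s) (hf' : HasFDerivWithinAt f f' s x) :
    f x + f' (y - x) ≤ f y := by
  let line : ℝ →ᵃ[ℝ] F := AffineMap.lineMap x y
  have line_zero : line 0 = x := AffineMap.lineMap_apply_zero x y
  have line_one : line 1 = y := AffineMap.lineMap_apply_one x y
  have hderiv : HasDerivWithinAt (f ∘ line) (f' (y - x)) (line ⁻¹' s) 0 :=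
    HasFDerivWithinAt.comp_hasDerivWithinAt 0 (line_zero.symm ▸ hf')
      AffineMap.hasDerivWithinAt_lineMap (Set.mapsTo_preimage line s)
  have hslope : f' (y - x) ≤ slope (f ∘ line) 0 1 :=
    (hf.comp_affineMap line).le_slope_of_hasDerivWithinAt
      (by rwa [Set.mem_preimage, line_zero]) (by rwa [Set.mem_preimage, line_one]) one_pos hderiv
  rw [slope_def_field, Function.comp_apply, Function.comp_apply, line_zero, line_one] at hslope
  linarith

theorem convexOn_sub_le_inner_of_hasGradientWithinAt {E : Type*} [NormedAddCommGroup E]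
    [InnerProductSpace ℝ E] [CompleteSpace E] {s : Set E} {f : E → ℝ} {g x y : E}
    (hf : ConvexOn ℝ s f) (hx : x ∈ s) (hy : y ∈ s) (hg : HasGradientWithinAt f g s x) :
    f x - f y ≤ ⟪g, x - y⟫_ℝ := by
  have htangent := convexOn_add_le_of_hasFDerivWithinAt hf hx hy hg.hasFDerivWithinAt
  rw [InnerProductSpace.toDual_apply_apply, ← neg_sub x y, inner_neg_right] at htangent
  linarith

end FirstOrderCondition

section RealSums

theorem inv_sqrt_succ_le_two_mul_sqrt_sub (n : ℕ) :
    (√(n + 1 : ℕ))⁻¹ ≤ 2 * (√(n + 1 : ℕ) - √n) := by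
  have hpos : 0 < √(n + 1 : ℕ) := Real.sqrt_pos.2 (by positivity)
  have hsq_succ : √(n + 1 : ℕ) ^ 2 = n + 1 := by rw [Real.sq_sqrt (by positivity)]; push_cast; rfl
  have hsq : √(n : ℝ) ^ 2 = n := Real.sq_sqrt (by positivity)
  rw [inv_le_iff_one_le_mul₀ hpos]
  -- `2 r (r - q) = (r ^ 2 - q ^ 2) + (r - q) ^ 2` with `r = √(n + 1)`, `q = √n`
  nlinarith [sq_nonneg (√(n + 1 : ℕ) - √n)]

theorem sum_inv_sqrt_le_two_mul_sqrt (n : ℕ) : ∑ t ∈ Icc 1 n, (√t)⁻¹ ≤ 2 * √n := by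
  induction n with
  | zero => simp
  | succ n ih =>
    rw [sum_Icc_succ_top (Nat.le_add_left 1 n)]
    linarith [inv_sqrt_succ_le_two_mul_sqrt_sub n]

theorem sum_mul_sub_succ_le_of_monotoneOn {w a : ℕ → ℝ} {D : ℝ} {n : ℕ} (hn : 1 ≤ n)
    (hw : MonotoneOn w (Icc 1 n)) (hw₁ : 0 ≤ w 1) (ha : ∀ t ∈ Icc 1 n, a t ≤ D) :
    ∑ t ∈ Icc 1 n, w t * (a t - a (t + 1)) ≤ w n * (D - a (n + 1)) := by
  induction n, hn using Nat.le_induction with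
  | base =>
    rw [Icc_self, sum_singleton]
    gcongr
    exact ha 1 (by simp)
  | succ n hn ih =>
    have hsub : Icc 1 n ⊆ Icc 1 (n + 1) := Icc_subset_Icc_right n.le_succ
    have hlast : n + 1 ∈ Icc 1 (n + 1) := right_mem_Icc.2 (Nat.le_add_left 1 n)
    have hw_le : w n ≤ w (n + 1) := hw (hsub (right_mem_Icc.2 hn)) hlast n.le_succ
    rw [sum_Icc_succ_top (Nat.le_add_left 1 n)]
    calc ∑ t ∈ Icc 1 n, w t * (a t - a (t + 1)) + w (n + 1) * (a (n + 1) - a (n + 1 + 1))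
      _ ≤ w n * (D - a (n + 1)) + w (n + 1) * (a (n + 1) - a (n + 1 + 1)) := by
        gcongr
        exact ih (hw.mono (coe_subset.2 hsub)) fun t ht ↦ ha t (hsub ht)
      _ ≤ w (n + 1) * (D - a (n + 1)) + w (n + 1) * (a (n + 1) - a (n + 1 + 1)) := by
        gcongr
        exact sub_nonneg.2 (ha _ hlast)
      _ = w (n + 1) * (D - a (n + 1 + 1)) := by ring

end RealSums

section NearestPoint

variable {E : Type*} [NormedAddCommGroup E]

/-- `v` is a metric projection of `u` onto `K`: a point of `K` at minimal distance from `u`. As a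
relation rather than a function, it presupposes neither existence nor uniqueness. -/
def IsNearestPoint (K : Set E) (u v : E) : Prop :=
  v ∈ K ∧ ∀ w ∈ K, ‖v - u‖ ≤ ‖w - u‖

namespace IsNearestPoint

variable {K : Set E} {u v : E}

theorem norm_sub_eq_iInf (h : IsNearestPoint K u v) : ‖u - v‖ = ⨅ w : K, ‖u - w‖ := by
  have : Nonempty K := ⟨⟨v, h.1⟩⟩
  have hbdd : BddBelow (Set.range fun w : K ↦ ‖u - w‖) :=
    ⟨0, Set.forall_mem_range.2 fun _ ↦ norm_nonneg _⟩
  refine le_antisymm (le_ciInf fun w ↦ ?_) (ciInf_le hbdd ⟨v, h.1⟩)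
  rw [norm_sub_rev u v, norm_sub_rev u w]
  exact h.2 w w.2

variable [InnerProductSpace ℝ E] {y : E}

theorem norm_sub_sq_le (h : IsNearestPoint K u v) (hK : Convex ℝ K) (hy : y ∈ K) :
    ‖v - y‖ ^ 2 ≤ ‖u - y‖ ^ 2 := by
  have hobtuse : ⟪u - v, y - v⟫_ℝ ≤ 0 :=
    (norm_eq_iInf_iff_real_inner_le_zero hK h.1).1 h.norm_sub_eq_iInf y hy
  have hexpand : ‖u - y‖ ^ 2 = ‖u - v‖ ^ 2 - 2 * ⟪u - v, y - v⟫_ℝ + ‖v - y‖ ^ 2 := by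
    rw [← sub_sub_sub_cancel_right u y v, norm_sub_sq_real, norm_sub_rev y v]
  linarith [sq_nonneg ‖u - v‖]

theorem inner_le_of_step {x x' g : E} {η : ℝ} (hη : 0 < η)
    (h : IsNearestPoint K (x - η • g) x') (hK : Convex ℝ K) (hy : y ∈ K) :
    ⟪g, x - y⟫_ℝ ≤ (2 * η)⁻¹ * (‖x - y‖ ^ 2 - ‖x' - y‖ ^ 2) + η / 2 * ‖g‖ ^ 2 := by
  have hstep : ‖x' - y‖ ^ 2 ≤ ‖x - y‖ ^ 2 - 2 * (η * ⟪g, x - y⟫_ℝ) + η ^ 2 * ‖g‖ ^ 2 := by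
    simpa only [sub_right_comm x (η • g) y, norm_sub_sq_real (x - y), inner_smul_right,
      real_inner_comm, norm_smul, mul_pow, Real.norm_eq_abs, sq_abs] using h.norm_sub_sq_le hK hy
  calc ⟪g, x - y⟫_ℝ = (2 * η)⁻¹ * (2 * (η * ⟪g, x - y⟫_ℝ)) := by field_simp
    _ ≤ (2 * η)⁻¹ * (‖x - y‖ ^ 2 - ‖x' - y‖ ^ 2 + η ^ 2 * ‖g‖ ^ 2) := by gcongr; linarith
    _ = (2 * η)⁻¹ * (‖x - y‖ ^ 2 - ‖x' - y‖ ^ 2) + η / 2 * ‖g‖ ^ 2 := by field_simp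

end IsNearestPoint

end NearestPoint

section ProjectedDescent

theorem forall_mem_of_mem_one_of_mem_succ {α : Type*} {K : Set α} {x : ℕ → α} {T : ℕ}
    (hx₁ : x 1 ∈ K) (hsucc : ∀ t ∈ Icc 1 T, x (t + 1) ∈ K) : ∀ t ∈ Icc 1 T, x t ∈ K := by
  intro t ht
  obtain ⟨ht₁, htT⟩ := mem_Icc.1 ht
  induction t, ht₁ using Nat.le_induction with
  | base => exact hx₁
  | succ s hs _ => exact hsucc s (mem_Icc.2 ⟨hs, by lia⟩)

variable {E : Type*} [NormedAddCommGroup E] [InnerProductSpace ℝ E] {K : Set E} {T : ℕ}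
  {η : ℕ → ℝ} {x g : ℕ → E} {y : E} {d G : ℝ}

theorem sum_inner_le_of_antitoneOn_step (hK : Convex ℝ K) (hT : 1 ≤ T)
    (hη_pos : ∀ t ∈ Icc 1 T, 0 < η t) (hη_anti : AntitoneOn η (Icc 1 T))
    (hstep : ∀ t ∈ Icc 1 T, IsNearestPoint K (x t - η t • g t) (x (t + 1)))
    (hy : y ∈ K) (hdist : ∀ t ∈ Icc 1 T, ‖x t - y‖ ≤ d) :
    ∑ t ∈ Icc 1 T, ⟪g t, x t - y⟫_ℝ ≤
      d ^ 2 / (2 * η T) + ∑ t ∈ Icc 1 T, η t / 2 * ‖g t‖ ^ 2 := by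
  have hweight_mono : MonotoneOn (fun t ↦ (2 * η t)⁻¹) (Icc 1 T) := fun s hs t ht hst ↦
    inv_anti₀ (mul_pos two_pos (hη_pos t ht))
      (mul_le_mul_of_nonneg_left (hη_anti hs ht hst) two_pos.le)
  have hη_one : 0 < η 1 := hη_pos 1 (left_mem_Icc.2 hT)
  have hη_last : 0 < η T := hη_pos T (right_mem_Icc.2 hT)
  have htelescope := sum_mul_sub_succ_le_of_monotoneOn (a := fun t ↦ ‖x t - y‖ ^ 2) (D := d ^ 2)
    hT hweight_mono (by positivity)
    fun t ht ↦ pow_le_pow_left₀ (norm_nonneg _) (hdist t ht) 2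
  calc ∑ t ∈ Icc 1 T, ⟪g t, x t - y⟫_ℝ
    _ ≤ ∑ t ∈ Icc 1 T, ((2 * η t)⁻¹ * (‖x t - y‖ ^ 2 - ‖x (t + 1) - y‖ ^ 2)
          + η t / 2 * ‖g t‖ ^ 2) :=
      sum_le_sum fun t ht ↦ (hstep t ht).inner_le_of_step (hη_pos t ht) hK hy
    _ ≤ (2 * η T)⁻¹ * (d ^ 2 - ‖x (T + 1) - y‖ ^ 2) + ∑ t ∈ Icc 1 T, η t / 2 * ‖g t‖ ^ 2 := by
      rw [sum_add_distrib]
      gcongr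
    _ ≤ d ^ 2 / (2 * η T) + ∑ t ∈ Icc 1 T, η t / 2 * ‖g t‖ ^ 2 := by
      rw [div_eq_inv_mul]
      gcongr
      exact sub_le_self _ (sq_nonneg _)

theorem sum_inner_le_of_sqrt_step (hK : Convex ℝ K) (hT : 1 ≤ T) (hd : 0 < d) (hG : 0 < G)
    (hη : ∀ t ∈ Icc 1 T, η t = d / (G * √t))
    (hstep : ∀ t ∈ Icc 1 T, IsNearestPoint K (x t - η t • g t) (x (t + 1)))
    (hg : ∀ t ∈ Icc 1 T, ‖g t‖ ≤ G) (hy : y ∈ K) (hdist : ∀ t ∈ Icc 1 T, ‖x t - y‖ ≤ d) :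
    ∑ t ∈ Icc 1 T, ⟪g t, x t - y⟫_ℝ ≤ 3 / 2 * G * d * √T := by
  have hsqrt_pos : ∀ t ∈ Icc 1 T, 0 < √(t : ℝ) := fun t ht ↦
    Real.sqrt_pos.2 (Nat.cast_pos.2 (mem_Icc.1 ht).1)
  have hη_pos : ∀ t ∈ Icc 1 T, 0 < η t := fun t ht ↦
    hη t ht ▸ div_pos hd (mul_pos hG (hsqrt_pos t ht))
  have hη_anti : AntitoneOn η (Icc 1 T) := by
    intro s hs t ht hst
    have hs_pos := hsqrt_pos s hs
    rw [hη s hs, hη t ht]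
    gcongr
  have hpotential : d ^ 2 / (2 * η T) = G * d * √T / 2 := by
    rw [hη T (right_mem_Icc.2 hT)]
    field_simp
  have hgradient : ∑ t ∈ Icc 1 T, η t / 2 * ‖g t‖ ^ 2 ≤ G * d * √T := by
    calc ∑ t ∈ Icc 1 T, η t / 2 * ‖g t‖ ^ 2
      _ ≤ ∑ t ∈ Icc 1 T, G * d / 2 * (√t)⁻¹ := by
        refine sum_le_sum fun t ht ↦ ?_
        have hηt_pos := hη_pos t ht
        calc η t / 2 * ‖g t‖ ^ 2 ≤ η t / 2 * G ^ 2 := by gcongr; exact hg t ht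
          _ = G * d / 2 * (√t)⁻¹ := by rw [hη t ht]; field_simp
      _ ≤ G * d / 2 * (2 * √T) := by
        rw [← mul_sum]
        gcongr
        exact sum_inv_sqrt_le_two_mul_sqrt T
      _ = G * d * √T := by ring
  linarith [sum_inner_le_of_antitoneOn_step hK hT hη_pos hη_anti hstep hy hdist]

theorem ogd_regret_bound_general (hK : Convex ℝ K) (hT : 1 ≤ T) (hd : 0 < d) (hG : 0 < G)
    (hη : ∀ t ∈ Icc 1 T, η t = d / (G * √t))
    (hstep : ∀ t ∈ Icc 1 T, IsNearestPoint K (x t - η t • g t) (x (t + 1)))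
    (hg : ∀ t ∈ Icc 1 T, ‖g t‖ ≤ G) (hy : y ∈ K) (hdist : ∀ t ∈ Icc 1 T, ‖x t - y‖ ≤ d)
    {f : ℕ → E → ℝ} (hsubgrad : ∀ t ∈ Icc 1 T, f t (x t) - f t y ≤ ⟪g t, x t - y⟫_ℝ) :
    ∑ t ∈ Icc 1 T, f t (x t) - ∑ t ∈ Icc 1 T, f t y ≤ 3 / 2 * G * d * √T := by
  rw [← sum_sub_distrib]
  exact (sum_le_sum hsubgrad).trans (sum_inner_le_of_sqrt_step hK hT hd hG hη hstep hg hy hdist)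

end ProjectedDescent

/-- Regret bound for projected online gradient descent with step sizes `η t = d / (G √t)`:
for every comparator `y ∈ K`, `∑_{t=1}^T f t (x t) − ∑_{t=1}^T f t y ≤ 3 G d √T`. -/
theorem ogd_regret_bound
    {E : Type*} [NormedAddCommGroup E] [InnerProductSpace ℝ E] [CompleteSpace E]
    (K : Set E) (hKne : K.Nonempty) (hKclosed : IsClosed K) (hKconv : Convex ℝ K)
    (d : ℝ) (hd : 0 < d) (hdiam : ∀ x ∈ K, ∀ y ∈ K, ‖x - y‖ ≤ d)
    (T : ℕ) (hT : 0 < T)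
    (f : ℕ → E → ℝ)
    (hconv : ∀ t ∈ Finset.Icc 1 T, ConvexOn ℝ Set.univ (f t))
    (hdiff : ∀ t ∈ Finset.Icc 1 T, Differentiable ℝ (f t))
    (G : ℝ) (hG : 0 < G)
    (hgrad : ∀ t ∈ Finset.Icc 1 T, ∀ x ∈ K, ‖gradient (f t) x‖ ≤ G)
    (η : ℕ → ℝ) (hη : ∀ t : ℕ, η t = d / (G * Real.sqrt t))
    (x : ℕ → E) (hx1 : x 1 ∈ K)
    (hstep : ∀ t ∈ Finset.Icc 1 T, x (t + 1) ∈ K ∧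
      ∀ y ∈ K, ‖x (t + 1) - (x t - η t • gradient (f t) (x t))‖ ≤
        ‖y - (x t - η t • gradient (f t) (x t))‖)
    (y : E) (hy : y ∈ K) :
    (∑ t ∈ Finset.Icc 1 T, f t (x t)) - ∑ t ∈ Finset.Icc 1 T, f t y ≤
      3 * G * d * Real.sqrt T := by
  have hxK : ∀ t ∈ Icc 1 T, x t ∈ K :=
    forall_mem_of_mem_one_of_mem_succ hx1 fun t ht ↦ (hstep t ht).1
  have hsubgrad : ∀ t ∈ Icc 1 T, f t (x t) - f t y ≤ ⟪gradient (f t) (x t), x t - y⟫_ℝ :=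
    fun t ht ↦ convexOn_sub_le_inner_of_hasGradientWithinAt (hconv t ht) (Set.mem_univ _)
      (Set.mem_univ _) (hasGradientWithinAt_univ.2 (hdiff t ht (x t)).hasGradientAt)
  refine (ogd_regret_bound_general hKconv hT hd hG (fun t _ ↦ hη t) hstep
    (fun t ht ↦ hgrad t ht _ (hxK t ht)) hy (fun t ht ↦ hdiam _ (hxK t ht) y hy) hsubgrad).trans ?_
  gcongr
  norm_num
end
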